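/- arXiv:1012.1790 — 3 statements merged into one kernel-verified Lean document; each statement's English description precedes it below -/
import Mathlib

section
/- (Condensation Lemma / Desnanot–Jacobi identity.) Let A be an n×n matrix (n ≥ 3) with entries a_{ij} over a commutative ring. Let b_{11} be the determinant of the (n−1)×(n−1) submatrix of A obtained by deleting the last row and last column, b_{12} the determinant of the submatrix obtained by deleting the last row and first column, b_{21} the determinant of the submatrix obtained by deleting the first row and last column, and b_{22} the determinant of the submatrix obtained by deleting the first row and first column. Let C be the determinant of the central (n−2)×(n−2) submatrix of A obtained by deleting both the first and last rows and both the first and last columns. Then b_{11}b_{22} − b_{12}b_{21} = (det A) · C. -/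
/-!
If `M = [[P, Q], [S, T]]` and `adj M = [[W, X], [Y, Z]]`, then
`M * adj M = det M • 1` gives `M * [[W, 0], [Y, 1]] = [[det M • 1, Q], [0, T]]`, so that
`det M * det W = (det M) ^ k * det T` with `k` the order of `P`. For the matrix of indeterminates
over `ℤ` the factor `det M` can be cancelled, and the resulting identity (Jacobi's complementary
minor theorem) specializes to every commutative ring. The condensation identity is the case `k = 2`
in which `P` occupies the first and last rows and columns: the entries of `W` are then the four
corner minors up to sign.
-/

section JacobiComplementaryMinor

open Matrix

variable {R m n o : Type*} [CommRing R] [Fintype m] [DecidableEq m] [Fintype n] [DecidableEq n]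
  [Fintype o] [DecidableEq o]

theorem mul_fromBlocks_adjugate (M : Matrix (m ⊕ n) (m ⊕ n) R) :
    M * fromBlocks M.adjugate.toBlocks₁₁ 0 M.adjugate.toBlocks₂₁ 1 =
      fromBlocks (M.det • 1) M.toBlocks₁₂ 0 M.toBlocks₂₂ := by
  have h_adj := M.mul_adjugate
  rw [← fromBlocks_toBlocks M.adjugate, ← fromBlocks_one, fromBlocks_smul] at h_adj
  nth_rewrite 1 [← fromBlocks_toBlocks M] at h_adj ⊢
  simp only [fromBlocks_multiply, fromBlocks_inj, smul_zero] at h_adj ⊢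
  obtain ⟨h₁₁, -, h₂₁, -⟩ := h_adj
  exact ⟨h₁₁, by simp, h₂₁, by simp⟩

theorem det_mul_det_adjugate_toBlocks₁₁ (M : Matrix (m ⊕ n) (m ⊕ n) R) :
    M.det * M.adjugate.toBlocks₁₁.det = M.det ^ Fintype.card m * M.toBlocks₂₂.det := by
  simpa using congrArg det (mul_fromBlocks_adjugate M)

theorem det_adjugate_toBlocks₁₁ [Nonempty m] (M : Matrix (m ⊕ n) (m ⊕ n) R) :
    M.adjugate.toBlocks₁₁.det = M.det ^ (Fintype.card m - 1) * M.toBlocks₂₂.det := by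
  let X := mvPolynomialX (m ⊕ n) (m ⊕ n) ℤ
  have h_generic : X.adjugate.toBlocks₁₁.det =
      X.det ^ (Fintype.card m - 1) * X.toBlocks₂₂.det := by
    apply mul_left_cancel₀ (det_mvPolynomialX_ne_zero (m ⊕ n) ℤ)
    rw [← mul_assoc, mul_pow_sub_one Fintype.card_ne_zero]
    exact det_mul_det_adjugate_toBlocks₁₁ X
  let φ := MvPolynomial.aeval (R := ℤ) fun p : (m ⊕ n) × (m ⊕ n) => M p.1 p.2
  have hφ : φ.mapMatrix X = M := mvPolynomialX_mapMatrix_aeval ℤ M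
  have h_adj : φ.mapMatrix X.adjugate.toBlocks₁₁ = M.adjugate.toBlocks₁₁ := by
    rw [← hφ, ← AlgHom.map_adjugate]
    rfl
  have h_compl : φ.mapMatrix X.toBlocks₂₂ = M.toBlocks₂₂ := by
    rw [← hφ]
    rfl
  simpa only [map_mul, map_pow, AlgHom.map_det, hφ, h_adj, h_compl] using congrArg φ h_generic

theorem det_adjugate_submatrix_of_bijective [Nonempty m] (A : Matrix n n R) {f : m → n} {g : o → n}
    (hfg : (Sum.elim f g).Bijective) :
    (A.adjugate.submatrix f f).det =
      A.det ^ (Fintype.card m - 1) * (A.submatrix g g).det := by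
  let e := Equiv.ofBijective _ hfg
  have h_jacobi := det_adjugate_toBlocks₁₁ (A.submatrix e e)
  rwa [adjugate_submatrix_equiv_self, det_submatrix_equiv_self] at h_jacobi

end JacobiComplementaryMinor

theorem bijective_sumElim_ends_interior (n : ℕ) :
    (Sum.elim (![0, Fin.last (n + 1)] : Fin 2 → Fin (n + 2))
      fun i : Fin n => i.succ.castSucc).Bijective := by
  rw [Fintype.bijective_iff_injective_and_card]
  refine ⟨Function.Injective.sumElim ?_ ?_ ?_, ?_⟩
  · simp [Function.Injective, Fin.forall_fin_two, Fin.last_pos.ne, Fin.last_pos.ne']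
  · exact (Fin.castSucc_injective _).comp (Fin.succ_injective _)
  · intro k i
    fin_cases k
    · simp [Fin.ext_iff]
    · exact (Fin.castSucc_ne_last _).symm
  · simp [Nat.add_comm]

theorem det_adjugate_submatrix_ends {R : Type*} [CommRing R] {n : ℕ}
    (A : Matrix (Fin (n + 2)) (Fin (n + 2)) R) :
    (A.adjugate.submatrix ![0, Fin.last (n + 1)] ![0, Fin.last (n + 1)]).det =
      (A.submatrix Fin.castSucc Fin.castSucc).det * (A.submatrix Fin.succ Fin.succ).det
        - (A.submatrix Fin.castSucc Fin.succ).det * (A.submatrix Fin.succ Fin.castSucc).det := by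
  have h_sign : (-1 : R) ^ (n + 1) * (-1) ^ (n + 1) = 1 := by
    rw [← mul_pow, neg_one_mul, neg_neg, one_pow]
  simp only [Matrix.det_fin_two, Matrix.submatrix_apply, Matrix.cons_val_zero,
    Matrix.cons_val_one, Matrix.adjugate_fin_succ_eq_det_submatrix, Fin.succAbove_zero,
    Fin.succAbove_last, Fin.val_zero, Fin.val_last, pow_add, pow_zero]
  linear_combination
    ((A.submatrix Fin.castSucc Fin.castSucc).det * (A.submatrix Fin.succ Fin.succ).det
      - (A.submatrix Fin.castSucc Fin.succ).det * (A.submatrix Fin.succ Fin.castSucc).det) * h_sign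

/-- Desnanot–Jacobi (condensation) identity: for an `(n+3) × (n+3)` matrix `A`
(i.e. any square matrix of size at least 3) over a commutative ring,
`b₁₁ b₂₂ − b₁₂ b₂₁ = det A · C`, where the `bᵢⱼ` are the corner minors of order `n+2`
and `C` is the central minor of order `n+1`. -/
theorem stmt_2 {R : Type*} [CommRing R] (n : ℕ)
    (A : Matrix (Fin (n + 3)) (Fin (n + 3)) R) :
    (A.submatrix Fin.castSucc Fin.castSucc).det * (A.submatrix Fin.succ Fin.succ).det
      - (A.submatrix Fin.castSucc Fin.succ).det * (A.submatrix Fin.succ Fin.castSucc).det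
    = A.det *
      (A.submatrix (fun i : Fin (n + 1) => i.succ.castSucc)
        (fun j : Fin (n + 1) => j.succ.castSucc)).det := by
  rw [← det_adjugate_submatrix_ends,
    det_adjugate_submatrix_of_bijective A (bijective_sumElim_ends_interior (n + 1)),
    Fintype.card_fin, pow_one]
end

section
/- (Chiò pivotal condensation with pivot in the last position.) Let A be an n×n matrix (n ≥ 2) with entries a_{ij} over a commutative ring. Define the (n−1)×(n−1) matrix B with entries b_{ij} = a_{ij}·a_{nn} − a_{in}·a_{nj} for 1 ≤ i,j ≤ n−1. Then det B = (a_{nn})^{n−2} · det A. -/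
/-!
Let `A` have blocks `M`, `N`, `P`, `D`, with `D` square. Left multiplication of `A` by the block
triangular matrix with rows `(det D • 1, -N * adj D)` and `(0, 1)` clears the upper right block,
since `adj D * D = det D • 1`, and replaces `M` by `det D • M - N * adj D * P`. Comparing
determinants gives the condensation formula up to one factor `det D` on both sides. That factor
cancels for `X • 1 + A` over `R[X]`, where the determinant of the lower right block is monic;
then set `X = 0`. Chiò's identity is the case of a `1 × 1` block `D`.
-/

section Condensation

open Matrix Polynomial

variable {R m k : Type*} [CommRing R] [Fintype k] [DecidableEq k]

/-- The condensation of a block matrix along its lower right block, the pivot. It is the Schur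
complement of the pivot multiplied by the determinant of the pivot; using the adjugate in place of
the inverse, it is defined for pivots that are not invertible as well. For a `1 × 1` pivot its
entries are the `2 × 2` minors of Chiò's identity. -/
def condensation (A : Matrix (m ⊕ k) (m ⊕ k) R) : Matrix m m R :=
  A.toBlocks₂₂.det • A.toBlocks₁₁ - A.toBlocks₁₂ * A.toBlocks₂₂.adjugate * A.toBlocks₂₁

theorem condensation_apply_of_unique [Unique k] (A : Matrix (m ⊕ k) (m ⊕ k) R)
    (i j : m) :
    condensation A i j =
      A (.inl i) (.inl j) * A (.inr default) (.inr default) -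
        A (.inl i) (.inr default) * A (.inr default) (.inl j) := by
  simp [condensation, adjugate_subsingleton, mul_apply, toBlocks₁₁, toBlocks₁₂, toBlocks₂₁,
    toBlocks₂₂, mul_comm]

theorem map_condensation {S : Type*} [CommRing S] (f : R →+* S)
    (A : Matrix (m ⊕ k) (m ⊕ k) R) :
    (condensation A).map f = condensation (A.map f) := by
  have map_det_pivot : f A.toBlocks₂₂.det = (A.map f).toBlocks₂₂.det := f.map_det _
  have map_adjugate_pivot : A.toBlocks₂₂.adjugate.map f = (A.map f).toBlocks₂₂.adjugate :=
    f.map_adjugate _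
  rw [condensation, condensation, Matrix.map_sub f (map_sub f), Matrix.map_mul, Matrix.map_mul,
    Matrix.map_smul' f _ _ (map_mul f), map_det_pivot, map_adjugate_pivot]
  rfl

theorem monic_det_toBlocks₂₂_X_smul_one_add_C [DecidableEq m]
    (A : Matrix (m ⊕ k) (m ⊕ k) R) :
    ((X : R[X]) • (1 : Matrix (m ⊕ k) (m ⊕ k) R[X]) + A.map C).toBlocks₂₂.det.Monic := by
  have toBlocks₂₂_eq : ((X : R[X]) • (1 : Matrix (m ⊕ k) (m ⊕ k) R[X]) + A.map C).toBlocks₂₂ =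
      (X : R[X]) • 1 + A.toBlocks₂₂.map C := by
    ext i j
    simp [toBlocks₂₂, one_apply]
  rw [toBlocks₂₂_eq]
  exact leadingCoeff_det_X_one_add_C _

variable [Fintype m] [DecidableEq m]

theorem fromBlocks_mul_eq_fromBlocks_condensation (A : Matrix (m ⊕ k) (m ⊕ k) R) :
    fromBlocks (A.toBlocks₂₂.det • 1) (-(A.toBlocks₁₂ * A.toBlocks₂₂.adjugate)) 0 1 * A =
      fromBlocks (condensation A) 0 A.toBlocks₂₁ A.toBlocks₂₂ := by
  conv_lhs => rw [← fromBlocks_toBlocks A]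
  simp [fromBlocks_multiply, condensation, Matrix.mul_assoc, adjugate_mul, sub_eq_add_neg]

theorem det_condensation_mul_det_toBlocks₂₂ (A : Matrix (m ⊕ k) (m ⊕ k) R) :
    (condensation A).det * A.toBlocks₂₂.det = A.toBlocks₂₂.det ^ Fintype.card m * A.det := by
  rw [← det_fromBlocks_zero₁₂, ← fromBlocks_mul_eq_fromBlocks_condensation, det_mul,
    det_fromBlocks_zero₂₁, det_smul, det_one, det_one, mul_one, mul_one]

theorem det_condensation_of_isRightRegular [Nonempty m] {A : Matrix (m ⊕ k) (m ⊕ k) R}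
    (hA : IsRightRegular A.toBlocks₂₂.det) :
    (condensation A).det = A.toBlocks₂₂.det ^ (Fintype.card m - 1) * A.det := by
  apply hA
  simp only [det_condensation_mul_det_toBlocks₂₂]
  rw [mul_right_comm, pow_sub_one_mul Fintype.card_ne_zero]

theorem stmt_4_general [Nonempty m] (A : Matrix (m ⊕ k) (m ⊕ k) R) :
    (condensation A).det = A.toBlocks₂₂.det ^ (Fintype.card m - 1) * A.det := by
  let A' : Matrix (m ⊕ k) (m ⊕ k) R[X] := (X : R[X]) • 1 + A.map C
  let ev : R[X] →+* R := evalRingHom 0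
  have map_A' : A'.map ev = A := by
    ext i j
    simp [A', ev]
  have ev_det : ev A'.det = A.det := by
    rw [ev.map_det, ev.mapMatrix_apply, map_A']
  have ev_pivot : ev A'.toBlocks₂₂.det = A.toBlocks₂₂.det :=
    (ev.map_det _).trans (congrArg (fun B ↦ B.toBlocks₂₂.det) map_A')
  have ev_condensation : ev (condensation A').det = (condensation A).det := by
    rw [ev.map_det, ev.mapMatrix_apply, map_condensation, map_A']
  rw [← ev_condensation, det_condensation_of_isRightRegular
    (monic_det_toBlocks₂₂_X_smul_one_add_C A).isRegular.right, map_mul, map_pow, ev_pivot, ev_det]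

end Condensation

/-- Chiò pivotal condensation with pivot in the last position: for an
`(n+2) × (n+2)` matrix `A` over a commutative ring, the `(n+1) × (n+1)` matrix `B`
with entries `bᵢⱼ = aᵢⱼ aₙₙ − aᵢₙ aₙⱼ` satisfies `det B = aₙₙ ^ n · det A`. -/
theorem stmt_4 {R : Type*} [CommRing R] (n : ℕ)
    (A : Matrix (Fin (n + 2)) (Fin (n + 2)) R)
    (B : Matrix (Fin (n + 1)) (Fin (n + 1)) R)
    (hB : ∀ i j, B i j =
      A i.castSucc j.castSucc * A (Fin.last (n + 1)) (Fin.last (n + 1))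
        - A i.castSucc (Fin.last (n + 1)) * A (Fin.last (n + 1)) j.castSucc) :
    B.det = A (Fin.last (n + 1)) (Fin.last (n + 1)) ^ n * A.det := by
  -- Definitionally, `e` sends `inl i` to `i.castSucc` and `inr 0` to the last index.
  let e : Fin (n + 1) ⊕ Fin 1 ≃ Fin (n + 2) := finSumFinEquiv
  have hB' : B = condensation (A.submatrix e e) := by
    ext i j
    rw [hB, condensation_apply_of_unique]
    rfl
  rw [hB', stmt_4_general, Matrix.det_unique, Matrix.det_submatrix_equiv_self, Fintype.card_fin]
  rfl
end

section
/- (Chiò pivotal condensation, general pivot.) Let A be an n×n matrix (n ≥ 2) with entries a_{ij} over a commutative ring, and fix indices r, s with 1 ≤ r, s ≤ n. For every pair of indices i ≠ r and j ≠ s, define b_{ij} = σ_{ij}·(a_{ij}a_{rs} − a_{is}a_{rj}), where σ_{ij} = +1 if (r − i) and (s − j) have the same sign and σ_{ij} = −1 otherwise. Let B be the (n−1)×(n−1) matrix whose rows are indexed by the indices i ≠ r (in increasing order), columns by the indices j ≠ s (in increasing order), with entries b_{ij}. Then det B = (a_{rs})^{n−2} · det A. -/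
/-!
Multiply every row of `A` other than row `r` by the pivot `a_{rs}`, then subtract `a_{is}` times
row `r` from row `i`. This multiplies the determinant by `a_{rs} ^ (n - 1)` and clears column `s`
away from the pivot, so a Laplace expansion along that column gives
`a_{rs} · (-1) ^ (r + s) · det C = a_{rs} ^ (n - 1) · det A` for the condensed matrix `C`.
The pivot cancels when the entries are indeterminates, hence the identity specializes to any
commutative ring. Finally `σᵢⱼ` is a product of a row sign and a column sign, and these signs
together contribute `(-1) ^ (r + s)` to the determinant.
-/

open Matrix

section PivotMinors

variable {m n R S : Type*} [CommRing R] [CommRing S]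

/-- The matrix of the `2 × 2` minors of `A` formed by row `r`, column `s` and a further row and
column, oriented so that the pivot `A r s` occurs with a positive sign. It keeps the index types
of `A`: its row `r` and column `s` vanish. -/
def pivotMinors (A : Matrix m n R) (r : m) (s : n) : Matrix m n R :=
  of fun i j => A i j * A r s - A i s * A r j

theorem pivotMinors_apply (A : Matrix m n R) (r : m) (s : n) (i : m) (j : n) :
    pivotMinors A r s i j = A i j * A r s - A i s * A r j :=
  rfl

theorem pivotMinors_apply_pivot_col (A : Matrix m n R) (r : m) (s : n) (i : m) :
    pivotMinors A r s i s = 0 := by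
  rw [pivotMinors_apply, sub_self]

theorem pivotMinors_map (f : R →+* S) (A : Matrix m n R) (r : m) (s : n) :
    pivotMinors (A.map f) r s = (pivotMinors A r s).map f := by
  ext i j
  simp only [pivotMinors_apply, map_apply, map_sub, map_mul]

variable [Fintype n] [DecidableEq n]

theorem det_updateRow_pivotMinors (A : Matrix n n R) (r s : n) :
    ((pivotMinors A r s).updateRow r (A r)).det = A r s ^ (Fintype.card n - 1) * A.det := by
  let scale : n → R := Function.update (fun _ => A r s) r 1
  let coeff : n → R := Function.update (fun i => -A i s) r 0
  have prod_scale : ∏ i, scale i = A r s ^ (Fintype.card n - 1) := by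
    simp [scale, Finset.prod_update_of_mem, Finset.card_sdiff]
  have row_eq : ∀ i j, (pivotMinors A r s).updateRow r (A r) i j =
      of (fun i j => scale i * A i j) i j + coeff i * of (fun i j => scale i * A i j) r j := by
    intro i j
    obtain rfl | hi := eq_or_ne i r
    · simp [scale, coeff]
    · simp only [scale, coeff, updateRow_ne hi, pivotMinors_apply, of_apply,
        Function.update_of_ne hi, Function.update_self]
      ring
  rw [det_eq_of_forall_row_eq_smul_add_const coeff r (Function.update_self ..) row_eq,
    det_mul_column, prod_scale]

end PivotMinors

section Condensation

variable {R : Type*} [CommRing R] {n : ℕ}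

theorem det_eq_mul_det_submatrix_succAbove_of_col_eq_zero
    {A : Matrix (Fin (n + 1)) (Fin (n + 1)) R} {r s : Fin (n + 1)}
    (hA : ∀ i, i ≠ r → A i s = 0) :
    A.det = (-1) ^ (r + s : ℕ) * A r s * (A.submatrix r.succAbove s.succAbove).det := by
  rw [det_succ_column A s, Finset.sum_eq_single r (fun i _ hi => by simp [hA i hi]) (by simp)]

theorem pivot_mul_det_submatrix_pivotMinors (A : Matrix (Fin (n + 1)) (Fin (n + 1)) R)
    (r s : Fin (n + 1)) :
    A r s * ((-1) ^ (r + s : ℕ) *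
      ((pivotMinors A r s).submatrix r.succAbove s.succAbove).det) = A r s ^ n * A.det := by
  have col_eq_zero : ∀ i, i ≠ r → (pivotMinors A r s).updateRow r (A r) i s = 0 := by
    intro i hi
    rw [updateRow_ne hi, pivotMinors_apply_pivot_col]
  have h := det_updateRow_pivotMinors A r s
  rw [det_eq_mul_det_submatrix_succAbove_of_col_eq_zero col_eq_zero, updateRow_self,
    submatrix_updateRow_succAbove, Fintype.card_fin, Nat.add_sub_cancel] at h
  rw [← h]
  ring

theorem neg_one_pow_mul_det_submatrix_pivotMinors (A : Matrix (Fin (n + 2)) (Fin (n + 2)) R)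
    (r s : Fin (n + 2)) :
    (-1) ^ (r + s : ℕ) * ((pivotMinors A r s).submatrix r.succAbove s.succAbove).det =
      A r s ^ n * A.det := by
  let X := mvPolynomialX (Fin (n + 2)) (Fin (n + 2)) ℤ
  let φ := (MvPolynomial.aeval (R := ℤ) fun p : Fin (n + 2) × Fin (n + 2) => A p.1 p.2).toRingHom
  have map_X : X.map φ = A := mvPolynomialX_mapMatrix_aeval ℤ A
  have map_X_apply : φ (X r s) = A r s := congrFun₂ map_X r s
  have X_ne_zero : X r s ≠ 0 := MvPolynomial.X_ne_zero (r, s)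
  have generic : (-1) ^ (r + s : ℕ) *
      ((pivotMinors X r s).submatrix r.succAbove s.succAbove).det = X r s ^ n * X.det := by
    apply mul_left_cancel₀ X_ne_zero
    rw [pivot_mul_det_submatrix_pivotMinors, pow_succ', mul_assoc]
  have specialized := congrArg φ generic
  simpa only [map_mul, map_pow, map_neg, map_one, RingHom.map_det, RingHom.mapMatrix_apply,
    ← submatrix_map, ← pivotMinors_map, map_X, map_X_apply] using specialized

end Condensation

section Signs

variable {R : Type*} {n : ℕ}

/-- The sign by which the `i`-th remaining row (or column) is multiplied once row (or column) `r`
is removed: `-1` before `r` and `1` after it, so that `σᵢⱼ` is the product of a row sign and a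
column sign. -/
def pivotSign [One R] [Neg R] (r : Fin (n + 1)) (i : Fin n) : R :=
  if r.succAbove i < r then -1 else 1

theorem prod_pivotSign [CommRing R] (r : Fin (n + 1)) :
    ∏ i, pivotSign r i = (-1 : R) ^ (r : ℕ) := by
  have prod_all : ∏ i, (if i < r then (-1 : R) else 1) = (-1) ^ (r : ℕ) := by
    rw [Finset.prod_ite, Finset.prod_const_one, mul_one, Finset.prod_const,
      Finset.filter_gt_eq_Iio, Fin.card_Iio]
  rw [← prod_all, Fin.prod_univ_succAbove _ r, if_neg (lt_irrefl r), one_mul]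
  rfl

theorem ite_mul_pos_eq_mul_ite {α : Type*} [Ring α] [LinearOrder α] [IsStrictOrderedRing α]
    [MulOneClass R] [HasDistribNeg R] {x y : α} (hx : x ≠ 0) (hy : y ≠ 0) :
    (if 0 < x * y then (1 : R) else -1) =
      (if 0 < x then -1 else 1) * (if 0 < y then -1 else 1) := by
  rcases hx.lt_or_gt with hx | hx <;> rcases hy.lt_or_gt with hy | hy <;>
    simp [mul_pos_iff, hx, hy, hx.not_gt, hy.not_gt]

theorem ite_sub_mul_sub_pos_eq_pivotSign_mul {m : ℕ} [MulOneClass R] [HasDistribNeg R]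
    (r : Fin (m + 1)) (s : Fin (n + 1)) (i : Fin m) (j : Fin n) :
    (if (0 : ℤ) < (((r : ℕ) : ℤ) - ((r.succAbove i : ℕ) : ℤ))
      * (((s : ℕ) : ℤ) - ((s.succAbove j : ℕ) : ℤ)) then (1 : R) else -1) =
      pivotSign r i * pivotSign s j := by
  have sub_ne_zero_of_succAbove {k : ℕ} (t : Fin (k + 1)) (l : Fin k) :
      ((t : ℕ) : ℤ) - ((t.succAbove l : ℕ) : ℤ) ≠ 0 := by
    rw [sub_ne_zero, Nat.cast_inj.ne]
    exact Fin.val_ne_of_ne (Fin.ne_succAbove t l)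
  rw [ite_mul_pos_eq_mul_ite (sub_ne_zero_of_succAbove r i) (sub_ne_zero_of_succAbove s j)]
  simp only [sub_pos, Nat.cast_lt, Fin.val_fin_lt, pivotSign]

theorem det_diagonal_pivotSign_mul_mul_diagonal_pivotSign [CommRing R]
    (M : Matrix (Fin n) (Fin n) R) (r s : Fin (n + 1)) :
    (diagonal (pivotSign r) * M * diagonal (pivotSign s)).det = (-1) ^ (r + s : ℕ) * M.det := by
  rw [det_mul, det_mul, det_diagonal, det_diagonal, prod_pivotSign, prod_pivotSign, pow_add]
  ring

end Signs

/-- Chiò pivotal condensation with a general pivot `(r, s)`: for an `(n+2) × (n+2)`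
matrix `A` over a commutative ring, the `(n+1) × (n+1)` matrix `B` indexed by the rows
`≠ r` and columns `≠ s` (in increasing order, via `Fin.succAbove`), with entries
`σᵢⱼ (aᵢⱼ a_{rs} − a_{is} a_{rj})` where `σᵢⱼ` is the sign of `(r − i)(s − j)`,
satisfies `det B = a_{rs} ^ n · det A`. -/
theorem stmt_5 {R : Type*} [CommRing R] (n : ℕ)
    (A : Matrix (Fin (n + 2)) (Fin (n + 2)) R)
    (r s : Fin (n + 2))
    (B : Matrix (Fin (n + 1)) (Fin (n + 1)) R)
    (hB : ∀ i j, B i j =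
      (if (0 : ℤ) < (((r : ℕ) : ℤ) - ((r.succAbove i : ℕ) : ℤ))
            * (((s : ℕ) : ℤ) - ((s.succAbove j : ℕ) : ℤ)) then (1 : R) else -1)
        * (A (r.succAbove i) (s.succAbove j) * A r s
            - A (r.succAbove i) s * A r (s.succAbove j))) :
    B.det = A r s ^ n * A.det := by
  have B_eq : B = diagonal (pivotSign r) * (pivotMinors A r s).submatrix r.succAbove s.succAbove *
      diagonal (pivotSign s) := by
    ext i j
    rw [hB, ite_sub_mul_sub_pos_eq_pivotSign_mul, mul_diagonal, diagonal_mul, submatrix_apply,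
      pivotMinors_apply]
    ring
  rw [B_eq, det_diagonal_pivotSign_mul_mul_diagonal_pivotSign,
    neg_one_pow_mul_det_submatrix_pivotMinors]
end
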